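/- (Horn, finite-dimensional case) Let s₁ ≥ s₂ ≥ ⋯ ≥ s_n ≥ 0 and let λ₁, ..., λ_n be complex numbers with |λ₁| ≥ ⋯ ≥ |λ_n| such that |λ₁ λ₂ ⋯ λ_k| ≤ s₁ s₂ ⋯ s_k for all 1 ≤ k ≤ n. Then there exists an upper-triangular n × n complex matrix A with diagonal entries a_{jj} = λ_j and singular values s_j(A) ≤ s_j for all 1 ≤ j ≤ n. -/

import Mathlib

/-!
The theorem is proved by induction on `n`, keeping track of factorisations `A = X diag(s) Y`
with contractions `X`, `Y` (`Dominated`). Such a factorisation gives `s_j(A) ≤ s_j`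
(`Dominated.singVal_le`), and it is insensitive to permutations of `s`, which keeps the
ordering of `s` out of the matrix computations.

If `|λ₁| ≤ s_i` for all `i`, then `diag(λ)` itself works. Otherwise there is a `k` with
`s_{k+1} < |λ₁| ≤ s_k`. Put `μ = s_k s_{k+1} / |λ₁|`. Multiplying `diag(s_k, s_{k+1})` on both sides
by suitable unitaries gives an upper triangular `2 × 2` matrix with diagonal `(λ₁, μ)`. Replacing
the pair `s_k, s_{k+1}` by `μ` gives a sequence which is again nonincreasing, since
`s_{k+1} ≤ μ ≤ s_k`, and whose partial products dominate those of `λ₂, λ₃, …`: up to index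
`k - 1` because every factor is at least `|λ₁|`, and from then on because they are the partial
products of `s` divided by `|λ₁|` (`prod_mergeSeq`). By induction the smaller sequence dominates a
triangular matrix `T` with diagonal `λ₂, …, λ_n`, and bordering the two contractions of `T` by `1`
glues it to the `2 × 2` step (`Dominated.step`).
-/

/-- The `j`-th singular value (approximation number) of an operator:
`s_j(T) = inf {‖T - F‖ : rank F < j}`. -/
noncomputable def singVal {H : Type*} [NormedAddCommGroup H] [InnerProductSpace ℂ H]
    (j : ℕ) (T : H →L[ℂ] H) : ℝ :=
  sInf {c : ℝ | ∃ F : H →L[ℂ] H, LinearMap.rank (F : H →ₗ[ℂ] H) < (j : Cardinal) ∧ ‖T - F‖ = c}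

open Matrix

/-! ### Contractions and domination -/

/-- `X` is a contraction for the Euclidean norm; this is written with plain sums of squares, so that
it applies to vectors of `Fin n → ℂ`, whose own norm is the sup norm. -/
def IsContr {m : Type*} [Fintype m] (X : Matrix m m ℂ) : Prop :=
  ∀ v : m → ℂ, ∑ i, ‖(X *ᵥ v) i‖ ^ 2 ≤ ∑ i, ‖v i‖ ^ 2

/-- `A = X diag(s) Y` for two contractions `X` and `Y`. For nonincreasing `s ≥ 0` this
forces `s_j(A) ≤ s_j`, but the relation itself does not depend on the order of the entries
of `s`. -/
def Dominated {m : Type*} [Fintype m] [DecidableEq m] (A : Matrix m m ℂ) (s : m → ℝ) : Prop :=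
  ∃ X Y : Matrix m m ℂ, IsContr X ∧ IsContr Y ∧ A = X * diagonal (fun i => (s i : ℂ)) * Y

lemma IsContr.mul {m : Type*} [Fintype m] {X Y : Matrix m m ℂ} (hX : IsContr X)
    (hY : IsContr Y) : IsContr (X * Y) := fun v => by
  rw [← mulVec_mulVec]
  exact (hX _).trans (hY v)

lemma IsContr.diagonal {m : Type*} [Fintype m] [DecidableEq m] {d : m → ℂ}
    (hd : ∀ i, ‖d i‖ ≤ 1) : IsContr (Matrix.diagonal d) := fun v => by
  refine Finset.sum_le_sum fun i _ => ?_
  rw [mulVec_diagonal, norm_mul]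
  gcongr
  exact mul_le_of_le_one_left (norm_nonneg _) (hd i)

lemma IsContr.submatrix_left {m : Type*} [Fintype m] {X : Matrix m m ℂ} (hX : IsContr X)
    (σ : m ≃ m) : IsContr (X.submatrix σ id) := fun v => by
  have : ∀ i, (X.submatrix σ id *ᵥ v) i = (X *ᵥ v) (σ i) := fun i => rfl
  simp_rw [this]
  rw [Equiv.sum_comp σ (fun i => ‖(X *ᵥ v) i‖ ^ 2)]
  exact hX v

lemma IsContr.submatrix_right {m : Type*} [Fintype m] {X : Matrix m m ℂ} (hX : IsContr X)
    (σ : m ≃ m) : IsContr (X.submatrix id σ) := fun v => by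
  have : ∀ i, (X.submatrix id σ *ᵥ v) i = (X *ᵥ (v ∘ σ.symm)) i := fun i =>
    Fintype.sum_equiv σ (fun j => X i (σ j) * v j) (fun j => X i j * v (σ.symm j))
      fun j => by rw [Equiv.symm_apply_apply]
  simp_rw [this]
  refine (hX _).trans_eq ?_
  exact Equiv.sum_comp σ.symm (fun i => ‖v i‖ ^ 2)

lemma Dominated.perm {m : Type*} [Fintype m] [DecidableEq m] {A : Matrix m m ℂ} {s : m → ℝ}
    (σ : m ≃ m) (h : Dominated A (s ∘ σ)) : Dominated A s := by
  obtain ⟨X, Y, hX, hY, rfl⟩ := h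
  refine ⟨X.submatrix id σ.symm, Y.submatrix σ.symm id, hX.submatrix_right _,
    hY.submatrix_left _, ?_⟩
  ext i j
  simp only [Matrix.mul_apply (M := _ * _), mul_diagonal]
  change ∑ k, X i k * (s (σ k) : ℂ) * Y k j = ∑ k, X i (σ.symm k) * (s k : ℂ) * Y (σ.symm k) j
  rw [← Equiv.sum_comp σ.symm]
  simp

/-! ### The bordering step -/

/-- The block matrix `1 ⊕ X`. -/
def oneBlock {n : ℕ} (X : Matrix (Fin n) (Fin n) ℂ) : Matrix (Fin (n + 1)) (Fin (n + 1)) ℂ :=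
  of fun i j => Fin.cases (Fin.cases 1 (fun _ => 0) j) (fun i => Fin.cases 0 (fun j => X i j) j) i

lemma IsContr.oneBlock {n : ℕ} {X : Matrix (Fin n) (Fin n) ℂ} (hX : IsContr X) :
    IsContr (oneBlock X) := fun v => by
  have h := hX (fun i => v i.succ)
  simp only [mulVec, dotProduct] at h
  simpa [Fin.sum_univ_succ, _root_.oneBlock, mulVec, dotProduct] using h

/-- The block matrix `!![p, q; r, t] ⊕ 1`. -/
def twoBlock (n : ℕ) (p q r t : ℂ) : Matrix (Fin (n + 2)) (Fin (n + 2)) ℂ :=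
  of fun i j => Fin.cases (Fin.cases p (fun j => Fin.cases q (fun _ => 0) j) j)
    (fun i => Fin.cases (Fin.cases r (fun j => Fin.cases t (fun _ => 0) j) j)
      (fun i => Fin.cases 0 (fun j => Fin.cases 0 (fun j => (1 : Matrix (Fin n) (Fin n) ℂ) i j) j) j) i) i

section twoBlock_entries

variable {n : ℕ} (p q r t : ℂ) (i j : Fin n)

@[simp] lemma twoBlock_zero_zero : twoBlock n p q r t 0 0 = p := rfl
@[simp] lemma twoBlock_zero_one : twoBlock n p q r t 0 1 = q := rfl
@[simp] lemma twoBlock_zero_succ : twoBlock n p q r t 0 j.succ.succ = 0 := rfl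
@[simp] lemma twoBlock_one_zero : twoBlock n p q r t 1 0 = r := rfl
@[simp] lemma twoBlock_one_one : twoBlock n p q r t 1 1 = t := rfl
@[simp] lemma twoBlock_one_succ : twoBlock n p q r t 1 j.succ.succ = 0 := rfl
@[simp] lemma twoBlock_succ_zero : twoBlock n p q r t i.succ.succ 0 = 0 := rfl
@[simp] lemma twoBlock_succ_one : twoBlock n p q r t i.succ.succ 1 = 0 := rfl
@[simp] lemma twoBlock_succ_succ : twoBlock n p q r t i.succ.succ j.succ.succ =
    (1 : Matrix (Fin n) (Fin n) ℂ) i j := rfl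

end twoBlock_entries

lemma IsContr.twoBlock (n : ℕ) {p q r t : ℂ}
    (h : ∀ x y : ℂ, ‖p * x + q * y‖ ^ 2 + ‖r * x + t * y‖ ^ 2 ≤ ‖x‖ ^ 2 + ‖y‖ ^ 2) :
    IsContr (twoBlock n p q r t) := fun v => by
  have h := h (v 0) (v 1)
  simp [Fin.sum_univ_succ, mulVec, dotProduct, Matrix.one_apply]
  linarith

/-- A real rotation block is a contraction. -/
lemma rotation_contr (c s : ℝ) (h : c ^ 2 + s ^ 2 = 1) (x y : ℂ) :
    ‖(c : ℂ) * x + s * y‖ ^ 2 + ‖(-s : ℂ) * x + c * y‖ ^ 2 ≤ ‖x‖ ^ 2 + ‖y‖ ^ 2 := by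
  simp only [← Complex.normSq_eq_norm_sq, Complex.normSq_apply]
  simp
  have : s ^ 2 = 1 - c ^ 2 := by linarith
  ring_nf
  simp only [this]
  ring_nf
  exact le_rfl

/-- The step of the induction: if `b < l ≤ a` with `l = |lam|` and `μ l = a b`, then
`U diag(a, b) V` is upper triangular with diagonal `(lam, μ)` for suitable unitaries `U`, `V`. So a
matrix `T` dominated by `(μ, r)` can be bordered by the diagonal entry `lam` and a row, with the
outcome dominated by `(a, b, r)`. -/
lemma Dominated.step {n : ℕ} {T : Matrix (Fin (n + 1)) (Fin (n + 1)) ℂ} {r : Fin n → ℝ}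
    {a b μ : ℝ} {lam : ℂ} (hb : 0 ≤ b) (hbl : b < ‖lam‖) (hla : ‖lam‖ ≤ a)
    (hμ : μ * ‖lam‖ = a * b) (h : Dominated T (Fin.cons μ r : Fin (n + 1) → ℝ)) :
    ∃ A : Matrix (Fin (n + 2)) (Fin (n + 2)) ℂ, A 0 0 = lam ∧ (∀ i, A (Fin.succ i) 0 = 0) ∧
      (∀ i j, A (Fin.succ i) (Fin.succ j) = T i j) ∧
      Dominated A (Fin.cons a (Fin.cons b r : Fin (n + 1) → ℝ) : Fin (n + 2) → ℝ) := by
  obtain ⟨X, Y, hX, hY, rfl⟩ := h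
  set l := ‖lam‖ with hl
  have hl0 : 0 < l := hb.trans_lt hbl
  have hd : 0 < a ^ 2 - b ^ 2 := by nlinarith
  -- `(c, s)` is the unit vector which `diag(a, b)` maps to a vector of length `l`.
  obtain ⟨c, hc⟩ : ∃ c : ℝ, c ^ 2 = (l ^ 2 - b ^ 2) / (a ^ 2 - b ^ 2) :=
    ⟨_, Real.sq_sqrt (div_nonneg (by nlinarith) hd.le)⟩
  obtain ⟨s, hs⟩ : ∃ s : ℝ, s ^ 2 = (a ^ 2 - l ^ 2) / (a ^ 2 - b ^ 2) :=
    ⟨_, Real.sq_sqrt (div_nonneg (by nlinarith) hd.le)⟩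
  have h1 : c ^ 2 + s ^ 2 = 1 := by rw [hc, hs]; field_simp; ring
  have h2 : (a * c) ^ 2 + (b * s) ^ 2 = l ^ 2 := by
    rw [mul_pow, mul_pow, hc, hs]; field_simp; ring
  have hU := rotation_contr (a * c / l) (b * s / l) (by
    rw [div_pow, div_pow, ← add_div, h2]; field_simp)
  have hV := rotation_contr c (-s) (by simpa using h1)
  let D : Fin (n + 2) → ℂ := fun i => Fin.cases (lam / l) (fun _ => 1) i
  have hD : ∀ i, ‖D i‖ ≤ 1 := by
    intro i
    refine Fin.cases ?_ (fun i => ?_) i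
    · simp [D, ← hl, abs_of_pos hl0, hl0.ne']
    · simp [D]
  let U := twoBlock n (a * c / l : ℝ) (b * s / l : ℝ) (-(b * s / l : ℝ)) (a * c / l : ℝ)
  let V := twoBlock n c (-s : ℝ) (-(-s : ℝ)) c
  set S : Fin (n + 2) → ℝ := Fin.cons a (Fin.cons b r : Fin (n + 1) → ℝ) with hS
  let M := diagonal D * U * diagonal (fun i => (S i : ℂ)) * V
  have hlC : (l : ℂ) ≠ 0 := by exact_mod_cast hl0.ne'
  have h1C : (c : ℂ) ^ 2 + (s : ℂ) ^ 2 = 1 := by exact_mod_cast h1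
  have h2C : ((a : ℂ) * c) ^ 2 + ((b : ℂ) * s) ^ 2 = (l : ℂ) ^ 2 := by exact_mod_cast h2
  have hμC : (μ : ℂ) * l = a * b := by exact_mod_cast hμ
  have hM : ∀ i j, M i j = D i * ∑ k, U i k * (S k : ℂ) * V k j := by
    intro i j
    simp only [M]
    rw [Matrix.mul_apply, Finset.mul_sum]
    refine Finset.sum_congr rfl fun k _ => ?_
    rw [mul_diagonal, diagonal_mul]
    ring
  have D0 : D 0 = lam / l := rfl
  have D1 : D 1 = 1 := rfl
  have Ds : ∀ i : Fin n, D i.succ.succ = 1 := fun _ => rfl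
  have S0 : S 0 = a := rfl
  have S1 : S 1 = b := rfl
  have Ss : ∀ i : Fin n, S i.succ.succ = r i := fun _ => rfl
  have M00 : M 0 0 = lam := by
    rw [hM]
    simp [U, V, Fin.sum_univ_succ, D0, S0, S1]
    field_simp
    linear_combination lam * h2C
  have Ms0 : ∀ i, M (Fin.succ i) 0 = 0 := by
    intro i
    rw [hM]
    refine Fin.cases ?_ (fun i => ?_) i
    · simp [U, V, Fin.sum_univ_succ, D1, S0, S1]
      ring
    · simp [U, V, Fin.sum_univ_succ]
  have Mss : ∀ i j, M (Fin.succ i) (Fin.succ j) =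
      diagonal (fun i => ((Fin.cons μ r : Fin (n + 1) → ℝ) i : ℂ)) i j := by
    intro i j
    rw [hM]
    refine Fin.cases ?_ (fun i => ?_) i <;> refine Fin.cases ?_ (fun j => ?_) j
    · simp [U, V, Fin.sum_univ_succ, D1, S0, S1]
      field_simp
      linear_combination (a : ℂ) * b * h1C - hμC
    · simp [U, V, Fin.sum_univ_succ, (Fin.succ_ne_zero _).symm]
    · simp [U, V, Fin.sum_univ_succ, Fin.succ_ne_zero]
    · simp +contextual [U, V, Fin.sum_univ_succ, diagonal_apply, Ds, Ss, Matrix.one_apply]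
  refine ⟨oneBlock X * M * oneBlock Y, ?_, ?_, ?_, oneBlock X * (diagonal D * U), V * oneBlock Y,
    hX.oneBlock.mul ((IsContr.diagonal hD).mul (IsContr.twoBlock n hU)),
    (IsContr.twoBlock n hV).mul hY.oneBlock, ?_⟩
  · rw [Matrix.mul_apply, Fin.sum_univ_succ, Matrix.mul_apply, Fin.sum_univ_succ]
    simp [oneBlock, M00]
  · intro i
    rw [Matrix.mul_apply, Fin.sum_univ_succ, Matrix.mul_apply, Fin.sum_univ_succ]
    simp [oneBlock, Ms0]
  · intro i j
    rw [Matrix.mul_apply, Fin.sum_univ_succ, Matrix.mul_apply, Fin.sum_univ_succ]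
    simp only [Matrix.mul_apply, Fin.sum_univ_succ (n := n + 1), Ms0, Mss]
    simp [oneBlock]
  · simp only [M, Matrix.mul_assoc]

/-! ### Merging two entries of `s` and the induction -/

/-- The sequence `s` with the entries `s k, s (k + 1)` replaced by the single entry `μ`. -/
def mergeSeq (s : ℕ → ℝ) (k : ℕ) (μ : ℝ) (i : ℕ) : ℝ :=
  if i < k then s i else if i = k then μ else s (i + 1)

/-- A permutation of `Fin (n + 1)` taking `0` to `p` and extending a given
permutation of the remaining indices. -/
lemma exists_perm {n : ℕ} (p : Fin (n + 1)) (τ : Fin n ≃ Fin n) :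
    ∃ σ : Fin (n + 1) ≃ Fin (n + 1), σ 0 = p ∧ ∀ i, σ (Fin.succ i) = p.succAbove (τ i) :=
  ⟨(finSuccEquiv' 0).trans ((Equiv.optionCongr τ).trans (finSuccEquiv' p).symm), by simp,
    fun i => by
      have : finSuccEquiv' (0 : Fin (n + 1)) i.succ = some i := by
        rw [← Fin.succAbove_zero_apply, finSuccEquiv'_succAbove]
      simp [this]⟩

/-- Beyond the merged index, the partial products of the merged sequence are those of `s` divided
by `l`. -/
lemma prod_mergeSeq (s : ℕ → ℝ) (k : ℕ) (μ l : ℝ) (h : μ * l = s k * s (k + 1)) (m : ℕ) :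
    (∏ i ∈ Finset.range (k + 1 + m), mergeSeq s k μ i) * l =
      ∏ i ∈ Finset.range (k + 2 + m), s i := by
  induction m with
  | zero =>
    have : ∏ i ∈ Finset.range k, mergeSeq s k μ i = ∏ i ∈ Finset.range k, s i :=
      Finset.prod_congr rfl fun i hi => by simp [mergeSeq, Finset.mem_range.1 hi]
    rw [add_zero, add_zero, Finset.prod_range_succ, Finset.prod_range_succ, Finset.prod_range_succ,
      this]
    simp only [mergeSeq, lt_irrefl, if_true, if_false]
    rw [mul_assoc, h, mul_assoc]
  | succ m ih =>
    rw [← add_assoc, ← add_assoc, Finset.prod_range_succ, Finset.prod_range_succ, ← ih]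
    have : mergeSeq s k μ (k + 1 + m) = s (k + 2 + m) := by
      rw [mergeSeq, if_neg (by omega), if_neg (by omega)]
      congr 1; omega
    rw [this]; ring

/-- Horn's theorem for sequences indexed by `ℕ`, with `Dominated` in place of the
bounds on the singular values. -/
lemma exists_dominated : ∀ (n : ℕ) (s : ℕ → ℝ) (lam : ℕ → ℂ), Antitone s → (∀ i, 0 ≤ s i) →
    (Antitone fun i => ‖lam i‖) →
    (∀ k, ∏ i ∈ Finset.range k, ‖lam i‖ ≤ ∏ i ∈ Finset.range k, s i) →
    ∃ A : Matrix (Fin n) (Fin n) ℂ, (∀ i j : Fin n, j < i → A i j = 0) ∧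
      (∀ j : Fin n, A j j = lam j) ∧ Dominated A (fun i : Fin n => s i) := by
  intro n
  induction n with
  | zero =>
    intro s lam _ _ _ _
    exact ⟨0, fun i => i.elim0, fun i => i.elim0, 0, 0, fun v => by simp, fun v => by simp,
      Subsingleton.elim _ _⟩
  | succ n ih =>
    intro s lam hs hs0 hlam hprod
    by_cases hall : ∀ i < n + 1, ‖lam 0‖ ≤ s i
    -- If every `s i` is at least `|lam 0|`, the largest `|lam j|`, a diagonal matrix will do.
    · have hle : ∀ i : Fin (n + 1), ‖lam i‖ ≤ s i := fun i =>
        (hlam (Nat.zero_le i)).trans (hall i i.2)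
      refine ⟨diagonal fun i => lam i, fun i j h => diagonal_apply_ne _ h.ne',
        fun j => diagonal_apply_eq _ _, diagonal fun i => lam i / s i, 1, ?_, fun v => by simp, ?_⟩
      · refine IsContr.diagonal fun i => ?_
        rw [norm_div, Complex.norm_real, Real.norm_of_nonneg (hs0 i)]
        exact div_le_one_of_le₀ (hle i) (hs0 i)
      · rw [mul_one, diagonal_mul_diagonal]
        congr 1
        ext i
        rcases eq_or_ne (s i) 0 with h | h
        · have := hle i
          rw [h, norm_le_zero_iff] at this
          simp [this]
        · have : (s i : ℂ) ≠ 0 := by exact_mod_cast h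
          field_simp
    -- Otherwise let `m` be the first index with `s m < |lam 0|`; the pair `s (m - 1), s m` is merged.
    · have hex : ∃ i, i < n + 1 ∧ s i < ‖lam 0‖ := by push Not at hall; exact hall
      classical
      obtain ⟨hmn, hml⟩ := Nat.find_spec hex
      have hmin : ∀ i < Nat.find hex, ‖lam 0‖ ≤ s i := fun i hi => by
        by_contra hc
        exact Nat.find_min hex hi ⟨hi.trans hmn, not_le.1 hc⟩
      generalize Nat.find hex = m at hmn hml hmin
      obtain ⟨k, rfl⟩ : ∃ k, m = k + 1 := by
        refine Nat.exists_eq_succ_of_ne_zero ?_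
        rintro rfl
        have := hprod 1
        simp at this
        linarith
      obtain ⟨n, rfl⟩ : ∃ n', n = n' + 1 := ⟨n - 1, by omega⟩
      have hl0 : 0 < ‖lam 0‖ := (hs0 _).trans_lt hml
      have hk := hmin k (by omega)
      set μ := s k * s (k + 1) / ‖lam 0‖ with hμd
      have hμ : μ * ‖lam 0‖ = s k * s (k + 1) := div_mul_cancel₀ _ hl0.ne'
      have hμ0 : 0 ≤ μ := div_nonneg (mul_nonneg (hs0 _) (hs0 _)) hl0.le
      have hμ1 : s (k + 1) ≤ μ := by
        rw [hμd, le_div_iff₀ hl0, mul_comm]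
        exact mul_le_mul_of_nonneg_right hk (hs0 _)
      have hμ2 : μ ≤ s k := by
        rw [hμd, div_le_iff₀ hl0]
        exact mul_le_mul_of_nonneg_left hml.le (hs0 _)
      obtain ⟨T, hT1, hT2, hT3⟩ := ih (mergeSeq s k μ) (fun i => lam (i + 1))
        (by
          refine antitone_nat_of_succ_le fun i => ?_
          simp only [mergeSeq]
          rcases lt_trichotomy (i + 1) k with h | h | h
          · rw [if_pos h, if_pos (by omega)]; exact hs (by omega)
          · rw [if_neg (by omega), if_pos h, if_pos (by omega)]
            exact hμ2.trans (hs (by omega))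
          · rw [if_neg (by omega), if_neg (by omega), if_neg (by omega)]
            split_ifs with h'
            · exact (hs (by omega)).trans hμ1
            · exact hs (by omega))
        (fun i => by simp only [mergeSeq]; split_ifs <;> first | exact hs0 _ | exact hμ0)
        (fun i j h => hlam (by omega))
        (by
          intro j
          rcases le_or_gt j k with hj | hj
          · refine Finset.prod_le_prod (fun _ _ => norm_nonneg _) fun i hi => ?_
            have hi := Finset.mem_range.1 hi
            rw [mergeSeq, if_pos (by omega)]
            exact (hlam (Nat.zero_le _)).trans (hmin i (by omega))
          · obtain ⟨m, rfl⟩ := Nat.exists_eq_add_of_lt hj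
            refine le_of_mul_le_mul_right ?_ hl0
            have e := prod_mergeSeq s k μ _ hμ m
            have hp := hprod (k + 2 + m)
            rw [show k + m + 1 = k + 1 + m by omega, e]
            rw [show k + 2 + m = k + 1 + m + 1 by omega, Finset.prod_range_succ'] at hp
            rwa [show k + 2 + m = k + 1 + m + 1 by omega])
      let q : Fin (n + 1) := ⟨k, by omega⟩
      let r : Fin n → ℝ := fun i => s (q.castSucc.succAbove (q.succAbove i))
      have hr : ∀ i : Fin n, r i = if (i : ℕ) < k then s i else s (i + 2) := by
        intro i
        simp only [r, q, Fin.succAbove, Fin.lt_def]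
        split_ifs <;> simp_all <;> omega
      obtain ⟨τ, hτ0, hτ⟩ := exists_perm q (Equiv.refl _)
      obtain ⟨σ, hσ0, hσ⟩ := exists_perm q.castSucc τ
      have hT4 : Dominated T (Fin.cons μ r : Fin (n + 1) → ℝ) := by
        refine Dominated.perm τ.symm ?_
        convert hT3 using 1
        funext i
        obtain ⟨i, rfl⟩ := τ.surjective i
        simp only [Function.comp_apply, Equiv.symm_apply_apply]
        refine Fin.cases ?_ (fun i => ?_) i
        · simp [hτ0, q, mergeSeq]
        · rw [hτ, Fin.cons_succ, hr]
          simp only [q, Fin.succAbove, Fin.lt_def, mergeSeq]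
          split_ifs <;> simp_all <;> omega
      obtain ⟨A, hA0, hA1, hA2, hA3⟩ := Dominated.step (hs0 _) hml hk hμ hT4
      refine ⟨A, ?_, ?_, Dominated.perm σ ?_⟩
      · intro i j
        refine Fin.cases ?_ (fun i => ?_) i
        · intro h; exact absurd h (Fin.not_lt_zero _)
        · refine Fin.cases ?_ (fun j => ?_) j
          · intro _; exact hA1 i
          · intro h; rw [hA2]; exact hT1 i j (Fin.succ_lt_succ_iff.1 h)
      · intro j
        refine Fin.cases ?_ (fun j => ?_) j
        · exact hA0
        · rw [hA2, hT2]; rfl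
      · convert hA3 using 1
        funext i
        refine Fin.cases ?_ (fun i => ?_) i
        · simp [hσ0, q]
        · rw [Function.comp_apply, hσ, Fin.cons_succ]
          refine Fin.cases ?_ (fun i => ?_) i
          · simp [hτ0, q, Fin.succAbove]
          · rw [hτ, Fin.cons_succ]; rfl

/-! ### Domination bounds the singular values -/

lemma IsContr.norm_toEuclideanCLM_le {n : ℕ} {X : Matrix (Fin n) (Fin n) ℂ} (hX : IsContr X) :
    ‖toEuclideanCLM (𝕜 := ℂ) X‖ ≤ 1 := by
  refine ContinuousLinearMap.opNorm_le_bound _ zero_le_one fun v => ?_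
  rw [one_mul]
  refine le_of_sq_le_sq ?_ (norm_nonneg _)
  rw [EuclideanSpace.norm_sq_eq, EuclideanSpace.norm_sq_eq]
  exact hX v.ofLp

/-- If `A = X diag(s) Y`, keeping the first `j` entries of `s` gives an approximation of
rank at most `j` and error at most `s j`. -/
lemma Dominated.singVal_le {n : ℕ} {A : Matrix (Fin n) (Fin n) ℂ} {s : Fin n → ℝ}
    (hs : Antitone s) (hs0 : ∀ i, 0 ≤ s i) (h : Dominated A s) (j : Fin n) :
    singVal (j + 1) (toEuclideanCLM (𝕜 := ℂ) A) ≤ s j := by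
  obtain ⟨X, Y, hX, hY, rfl⟩ := h
  let d : Fin n → ℂ := fun i => if i < j then (s i : ℂ) else 0
  have hbdd : BddBelow {c : ℝ | ∃ F : EuclideanSpace ℂ (Fin n) →L[ℂ] EuclideanSpace ℂ (Fin n),
      LinearMap.rank (F : EuclideanSpace ℂ (Fin n) →ₗ[ℂ] EuclideanSpace ℂ (Fin n)) <
        ((j + 1 : ℕ) : Cardinal) ∧
      ‖toEuclideanCLM (𝕜 := ℂ) (X * diagonal (fun i => (s i : ℂ)) * Y) - F‖ = c} :=
    ⟨0, by rintro c ⟨F, -, rfl⟩; exact norm_nonneg _⟩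
  refine (csInf_le hbdd ⟨toEuclideanCLM (𝕜 := ℂ) (X * diagonal d * Y), ?_, rfl⟩).trans ?_
  · have hd : LinearMap.rank (toEuclideanCLM (𝕜 := ℂ) (diagonal d) :
        EuclideanSpace ℂ (Fin n) →ₗ[ℂ] EuclideanSpace ℂ (Fin n)) ≤ ((j : ℕ) : Cardinal) := by
      rw [LinearMap.rank, ← Module.finrank_eq_rank, coe_toEuclideanCLM_eq_toEuclideanLin,
        toEuclideanLin_eq_toLin, ← Matrix.rank_eq_finrank_range_toLin, Matrix.rank_diagonal]
      norm_cast
      rw [Fintype.card_subtype]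
      refine (Finset.card_le_card (t := Finset.Iio j) fun i hi => ?_).trans_eq (by simp)
      by_contra hc
      simp_all [d]
    have : (toEuclideanCLM (𝕜 := ℂ) (X * diagonal d * Y) :
        EuclideanSpace ℂ (Fin n) →ₗ[ℂ] EuclideanSpace ℂ (Fin n)) =
        (toEuclideanCLM (𝕜 := ℂ) X : EuclideanSpace ℂ (Fin n) →ₗ[ℂ] EuclideanSpace ℂ (Fin n)) ∘ₗ
        ((toEuclideanCLM (𝕜 := ℂ) (diagonal d) :
          EuclideanSpace ℂ (Fin n) →ₗ[ℂ] EuclideanSpace ℂ (Fin n)) ∘ₗ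
        (toEuclideanCLM (𝕜 := ℂ) Y : EuclideanSpace ℂ (Fin n) →ₗ[ℂ] EuclideanSpace ℂ (Fin n))) := by
      rw [map_mul, map_mul, mul_assoc]; rfl
    rw [this]
    refine ((LinearMap.rank_comp_le_right _ _).trans
      ((LinearMap.rank_comp_le_left _ _).trans hd)).trans_lt ?_
    exact_mod_cast Nat.lt_succ_self _
  · have hE : X * diagonal (fun i => (s i : ℂ)) * Y - X * diagonal d * Y =
        X * diagonal (fun i => (s i : ℂ) - d i) * Y := by
      rw [← sub_mul, ← mul_sub, diagonal_sub]
    have hD : ‖toEuclideanCLM (𝕜 := ℂ) (diagonal (fun i => (s i : ℂ) - d i))‖ ≤ s j := by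
      open scoped Matrix.Norms.L2Operator in
      rw [l2_opNorm_toEuclideanCLM, l2_opNorm_diagonal, pi_norm_le_iff_of_nonneg (hs0 j)]
      intro i
      simp only [d]
      split_ifs with hi
      · simpa using hs0 j
      · rw [sub_zero, Complex.norm_real, Real.norm_of_nonneg (hs0 i)]
        exact hs (not_lt.1 hi)
    rw [← map_sub, hE, map_mul, map_mul]
    calc _ ≤ 1 * s j * 1 := (norm_mul_le _ _).trans (mul_le_mul ((norm_mul_le _ _).trans
            (mul_le_mul hX.norm_toEuclideanCLM_le hD (norm_nonneg _) zero_le_one))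
            hY.norm_toEuclideanCLM_le (norm_nonneg _) (by simpa using hs0 j))
      _ = s j := by ring

/-! ### Passing between `Fin n` and `ℕ` -/

/-- Extension of a finite family by zero to `ℕ`. -/
def extendZero {E : Type*} [Zero E] {n : ℕ} (f : Fin n → E) (i : ℕ) : E :=
  if h : i < n then f ⟨i, h⟩ else 0

lemma extendZero_antitone {n : ℕ} {f : Fin n → ℝ} (hf : Antitone f) (h0 : ∀ i, 0 ≤ f i) :
    Antitone (extendZero f) := by
  intro i j hij
  simp only [extendZero]
  split_ifs with h1 h2
  · exact hf hij
  · omega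
  · exact h0 _
  · exact le_rfl

lemma prod_extendZero {n : ℕ} (f : Fin n → ℝ) (k : Fin n) :
    ∏ i ∈ Finset.range (k + 1), extendZero f i = ∏ i ∈ Finset.Iic k, f i := by
  symm
  refine Finset.prod_bij (fun i _ => (i : ℕ)) ?_ ?_ ?_ ?_
  · intro i hi
    have : i ≤ k := Finset.mem_Iic.1 hi
    exact Finset.mem_range.2 (by omega)
  · intro i _ j _ h
    exact Fin.ext h
  · intro i hi
    have := Finset.mem_range.1 hi
    exact ⟨⟨i, by omega⟩, Finset.mem_Iic.2 (by rw [Fin.le_def]; simp; omega), rfl⟩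
  · intro i _
    simp [extendZero]

/-- Horn's theorem (finite dimensional): given `s₁ ≥ ⋯ ≥ s_n ≥ 0` and complex numbers
`λ₁, …, λ_n` with `|λ₁| ≥ ⋯ ≥ |λ_n|` and `|λ₁ ⋯ λ_k| ≤ s₁ ⋯ s_k` for all `k`, there is
an upper triangular `n × n` matrix with diagonal `λ_j` and singular values `s_j(A) ≤ s_j`. -/
theorem stmt12 (n : ℕ) (s : Fin n → ℝ) (hs_dec : Antitone s) (hs_nonneg : ∀ i, 0 ≤ s i)
    (lam : Fin n → ℂ) (hlam_dec : Antitone fun i => ‖lam i‖)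
    (hprod : ∀ k : Fin n, ∏ i ∈ Finset.Iic k, ‖lam i‖ ≤ ∏ i ∈ Finset.Iic k, s i) :
    ∃ A : Matrix (Fin n) (Fin n) ℂ,
      (∀ i j : Fin n, j < i → A i j = 0) ∧
      (∀ j : Fin n, A j j = lam j) ∧
      (∀ j : Fin n, singVal (j + 1) (Matrix.toEuclideanCLM (𝕜 := ℂ) A) ≤ s j) := by
  -- Extended by zero to `ℕ`, both sequences keep all the hypotheses: past `n` both products vanish.
  have hnorm : (fun i => ‖extendZero lam i‖) = extendZero fun i => ‖lam i‖ := by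
    funext i
    simp only [extendZero]
    split_ifs <;> simp
  obtain ⟨A, h1, h2, h3⟩ := exists_dominated n (extendZero s) (extendZero lam)
    (extendZero_antitone hs_dec hs_nonneg)
    (fun i => by simp only [extendZero]; split_ifs <;> first | exact hs_nonneg _ | exact le_rfl)
    (hnorm ▸ extendZero_antitone hlam_dec fun i => norm_nonneg _)
    (by
      intro k
      have hk : ∀ i, ‖extendZero lam i‖ = extendZero (fun i => ‖lam i‖) i := congrFun hnorm
      simp_rw [hk]
      rcases k with _ | k
      · simp
      · by_cases h : k < n
        · have := hprod ⟨k, h⟩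
          rwa [← prod_extendZero, ← prod_extendZero] at this
        · rw [Finset.prod_range_succ, Finset.prod_range_succ]
          simp [extendZero, h])
  have hs' : (fun i : Fin n => extendZero s i) = s := by
    funext i
    simp [extendZero]
  rw [hs'] at h3
  refine ⟨A, h1, fun j => ?_, fun j => h3.singVal_le hs_dec hs_nonneg j⟩
  rw [h2]
  simp [extendZero]
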